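/- For the lexicographically ordered square 𝕆: (i) for the full homeomorphism group 𝒢_𝕆, the family {cl(𝒢_𝕆·x) : x ∈ 𝕆} of closures of orbits has exactly 5 elements (i.e. h(𝒢_𝕆, 𝕆) = 4); (ii) for every subgroup G of the homeomorphism group of 𝕆, the family {cl(G·x) : x ∈ 𝕆} is either infinite or has at least 5 elements; (iii) for every natural number n ≥ 4 there exists a subgroup G of the homeomorphism group of 𝕆 whose family {cl(G·x) : x ∈ 𝕆} has exactly n + 1 elements; and (iv) there exists a subgroup G for which this family is infinite. Equivalently, P_h(𝕆) = {n : n ≥ 4} ∪ {+∞}. -/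

import Mathlib

open Set

/-- The unit interval `[0,1]`. -/
local notation "𝕀" => unitInterval

/-- The strict lexicographic order on `[0,1] × [0,1]`:
`(x,y) < (s,t)` iff `x < s`, or `x = s` and `y < t`. -/
def lexLT (p q : 𝕀 × 𝕀) : Prop := p.1 < q.1 ∨ (p.1 = q.1 ∧ p.2 < q.2)

/-- The order topology of the lexicographic order on `[0,1] × [0,1]`, generated by the
open rays. -/
def lexTop : TopologicalSpace (𝕀 × 𝕀) :=
  TopologicalSpace.generateFrom
    ({S | ∃ a, S = {x | lexLT a x}} ∪ {S | ∃ a, S = {x | lexLT x a}})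

/-- The group of self-homeomorphisms of a topological space, under composition. -/
instance homeoGroup {X : Type*} [TopologicalSpace X] : Group (X ≃ₜ X) where
  mul f g := g.trans f
  one := Homeomorph.refl X
  inv := Homeomorph.symm
  mul_assoc _ _ _ := rfl
  one_mul _ := Homeomorph.ext fun _ => rfl
  mul_one _ := Homeomorph.ext fun _ => rfl
  inv_mul_cancel := Homeomorph.self_trans_symm

/-- The family of closures of orbits of a subgroup `G` of the homeomorphism group of
the lexicographically ordered square. -/
def orbitClosures (G : Subgroup (@Homeomorph (𝕀 × 𝕀) (𝕀 × 𝕀) lexTop lexTop)) :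
    Set (Set (𝕀 × 𝕀)) :=
  {S | ∃ x : 𝕀 × 𝕀, S = @closure _ lexTop {y | ∃ g ∈ G, g x = y}}


section helpers

attribute [local instance] lexTop

theorem lex_exists_lub (S : Set (𝕀 ×ₗ 𝕀)) : ∃ b, IsLUB S b := by
  set x : 𝕀 := sSup ((fun p => (ofLex p).1) '' S) with hx
  have hx1 : IsLUB ((fun p => (ofLex p).1) '' S) x := isLUB_sSup _
  by_cases h : ∃ p ∈ S, (ofLex p).1 = x
  · obtain ⟨p0, hp0, hp0x⟩ := h
    have hy := isLUB_sSup {y : 𝕀 | toLex (x, y) ∈ S}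
    refine ⟨toLex (x, sSup {y : 𝕀 | toLex (x, y) ∈ S}), ?_, ?_⟩
    · intro p hp
      have h1 : (ofLex p).1 ≤ x := hx1.1 ⟨p, hp, rfl⟩
      rw [Prod.Lex.le_iff]
      rcases h1.lt_or_eq with h | h
      · exact Or.inl h
      · refine Or.inr ⟨h, hy.1 ?_⟩
        change toLex (x, (ofLex p).2) ∈ S
        rw [← h]; exact hp
    · intro b hb
      have h1 : x ≤ (ofLex b).1 := by
        apply hx1.2
        rintro _ ⟨p, hp, rfl⟩
        exact Prod.Lex.monotone_fst _ _ (hb hp)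
      rw [Prod.Lex.le_iff]
      rcases h1.lt_or_eq with h | h
      · exact Or.inl h
      · refine Or.inr ⟨h, hy.2 ?_⟩
        intro y hyS
        have := hb hyS
        rw [Prod.Lex.le_iff] at this
        rcases this with h2 | h2
        · exact absurd h2 (by simp [h])
        · exact h2.2
  · push Not at h
    refine ⟨toLex (x, 0), ?_, ?_⟩
    · intro p hp
      have h1 : (ofLex p).1 ≤ x := hx1.1 ⟨p, hp, rfl⟩
      rw [Prod.Lex.le_iff]
      exact Or.inl (lt_of_le_of_ne h1 (h p hp))
    · intro b hb
      have h1 : x ≤ (ofLex b).1 := by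
        apply hx1.2
        rintro _ ⟨p, hp, rfl⟩
        exact Prod.Lex.monotone_fst _ _ (hb hp)
      rw [Prod.Lex.le_iff]
      rcases h1.lt_or_eq with h | h
      · exact Or.inl h
      · exact Or.inr ⟨h, unitInterval.nonneg _⟩

open Classical in
noncomputable abbrev lexCLatt : CompleteLattice (𝕀 ×ₗ 𝕀) :=
  letI : SupSet (𝕀 ×ₗ 𝕀) := ⟨fun S => (lex_exists_lub S).choose⟩
  { completeLatticeOfSup (𝕀 ×ₗ 𝕀) (fun S => (lex_exists_lub S).choose_spec) with
    toLattice := inferInstance }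

noncomputable abbrev lexCCLO : ConditionallyCompleteLinearOrder (𝕀 ×ₗ 𝕀) :=
  { (inferInstance : LinearOrder (𝕀 ×ₗ 𝕀)),
    (@CompleteLattice.toConditionallyCompleteLattice _ lexCLatt) with
    csSup_of_not_bddAbove := fun _ hs => absurd ⟨⊤, fun _ _ => le_top⟩ hs
    csInf_of_not_bddBelow := fun _ hs => absurd ⟨⊥, fun _ _ => bot_le⟩ hs }

theorem lex_dense : DenselyOrdered (𝕀 ×ₗ 𝕀) := by
  constructor
  intro a b hab
  rw [Prod.Lex.lt_iff] at hab
  rcases hab with h | ⟨h, h'⟩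
  · obtain ⟨c, h1, h2⟩ := exists_between h
    exact ⟨toLex (c, 0), Prod.Lex.lt_iff.2 (Or.inl h1), Prod.Lex.lt_iff.2 (Or.inl h2)⟩
  · obtain ⟨c, h1, h2⟩ := exists_between h'
    exact ⟨toLex ((ofLex a).1, c), Prod.Lex.lt_iff.2 (Or.inr ⟨rfl, h1⟩),
      Prod.Lex.lt_iff.2 (Or.inr ⟨h, h2⟩)⟩

theorem lex_mono_or_anti (g : (𝕀 × 𝕀) ≃ₜ (𝕀 × 𝕀)) :
    (∀ p q, lexLT p q → lexLT (g p) (g q)) ∨ (∀ p q, lexLT p q → lexLT (g q) (g p)) := by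
  let _ : ConditionallyCompleteLinearOrder (𝕀 ×ₗ 𝕀) := lexCCLO
  let _ : TopologicalSpace (𝕀 ×ₗ 𝕀) := lexTop
  have : DenselyOrdered (𝕀 ×ₗ 𝕀) := lex_dense
  have : OrderTopology (𝕀 ×ₗ 𝕀) := by
    constructor
    change lexTop = _
    unfold lexTop
    congr 1
    ext S
    simp only [mem_union, mem_ofPred_eq]
    constructor
    · rintro (⟨a, rfl⟩ | ⟨a, rfl⟩)
      · refine ⟨toLex a, Or.inl ?_⟩
        ext x
        exact (Prod.Lex.toLex_lt_toLex (x := a) (y := x)).symm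
      · refine ⟨toLex a, Or.inr ?_⟩
        ext x
        exact (Prod.Lex.toLex_lt_toLex (x := x) (y := a)).symm
    · rintro ⟨a, rfl | rfl⟩
      · refine Or.inl ⟨ofLex a, ?_⟩
        ext x
        exact Prod.Lex.lt_iff
      · refine Or.inr ⟨ofLex a, ?_⟩
        ext x
        exact Prod.Lex.lt_iff
  have h := Continuous.strictMono_of_inj (α := 𝕀 ×ₗ 𝕀) (δ := 𝕀 ×ₗ 𝕀) (f := fun p => toLex (g (ofLex p)))
    g.continuous g.injective
  refine h.imp ?_ ?_
  · intro h p q hpq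
    exact Prod.Lex.toLex_lt_toLex.1 (h (a := toLex p) (b := toLex q) (Prod.Lex.toLex_lt_toLex.2 hpq))
  · intro h p q hpq
    exact Prod.Lex.toLex_lt_toLex.1 (h (a := toLex p) (b := toLex q) (Prod.Lex.toLex_lt_toLex.2 hpq))

theorem lex_open_gt (a : 𝕀 × 𝕀) : IsOpen {x | lexLT a x} :=
  TopologicalSpace.isOpen_generateFrom_of_mem (Or.inl ⟨a, rfl⟩)

theorem lex_open_lt (a : 𝕀 × 𝕀) : IsOpen {x | lexLT x a} :=
  TopologicalSpace.isOpen_generateFrom_of_mem (Or.inr ⟨a, rfl⟩)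

/-- Open pieces of a family of fibres are open. -/
theorem lex_open_fib (S : Set 𝕀) (a b : 𝕀) :
    IsOpen {p : 𝕀 × 𝕀 | p.1 ∈ S ∧ a < p.2 ∧ p.2 < b} := by
  have : {p : 𝕀 × 𝕀 | p.1 ∈ S ∧ a < p.2 ∧ p.2 < b} =
      ⋃ x ∈ S, ({p | lexLT (x, a) p} ∩ {p | lexLT p (x, b)}) := by
    ext ⟨x, y⟩
    simp only [mem_ofPred_eq, mem_iUnion, mem_inter_iff, lexLT, exists_prop]
    constructor
    · rintro ⟨h1, h2, h3⟩
      exact ⟨x, h1, Or.inr ⟨rfl, h2⟩, Or.inr ⟨rfl, h3⟩⟩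
    · rintro ⟨z, hz, h1 | ⟨h1, h1'⟩, h2 | ⟨h2, h2'⟩⟩
      · exact absurd h1 h2.asymm
      · exact absurd h1 (by simp [h2])
      · exact absurd h2 (by simp [h1])
      · subst h1; exact ⟨hz, h1', h2'⟩
  rw [this]
  exact isOpen_biUnion fun x _ => (lex_open_gt _).inter (lex_open_lt _)

def lexMk (e : (𝕀 × 𝕀) ≃ (𝕀 × 𝕀)) (h : ∀ p q, lexLT (e p) (e q) ↔ lexLT p q) :
    (𝕀 × 𝕀) ≃ₜ (𝕀 × 𝕀) where
  toEquiv := e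
  continuous_toFun := by
    refine continuous_generateFrom_iff.2 ?_
    rintro _ (⟨a, rfl⟩ | ⟨a, rfl⟩)
    · convert lex_open_gt (e.symm a) using 1
      ext x
      have := h (e.symm a) x
      simpa using this
    · convert lex_open_lt (e.symm a) using 1
      ext x
      have := h x (e.symm a)
      simpa using this
  continuous_invFun := by
    refine continuous_generateFrom_iff.2 ?_
    rintro _ (⟨a, rfl⟩ | ⟨a, rfl⟩)
    · convert lex_open_gt (e a) using 1
      ext x
      have := h a (e.symm x)
      simpa using this.symm
    · convert lex_open_lt (e a) using 1
      ext x
      have := h (e.symm x) a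
      simpa using this.symm

theorem lexLT_symm (p q : 𝕀 × 𝕀) :
    lexLT (unitInterval.symm p.1, unitInterval.symm p.2)
      (unitInterval.symm q.1, unitInterval.symm q.2) ↔ lexLT q p := by
  simp only [lexLT, unitInterval.symm_lt_symm, unitInterval.symm_inj]
  tauto

theorem lexRev_cont : Continuous
    (fun p : 𝕀 × 𝕀 => (unitInterval.symm p.1, unitInterval.symm p.2)) := by
  refine continuous_generateFrom_iff.2 ?_
  rintro _ (⟨a, rfl⟩ | ⟨a, rfl⟩)
  · convert lex_open_lt (unitInterval.symm a.1, unitInterval.symm a.2) using 1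
    ext x
    have := lexLT_symm (unitInterval.symm a.1, unitInterval.symm a.2) x
    simpa using this
  · convert lex_open_gt (unitInterval.symm a.1, unitInterval.symm a.2) using 1
    ext x
    have := lexLT_symm x (unitInterval.symm a.1, unitInterval.symm a.2)
    simpa using this

/-- The order reversing symmetry. -/
def lexRev : (𝕀 × 𝕀) ≃ₜ (𝕀 × 𝕀) where
  toFun p := (unitInterval.symm p.1, unitInterval.symm p.2)
  invFun p := (unitInterval.symm p.1, unitInterval.symm p.2)
  left_inv p := by simp
  right_inv p := by simp
  continuous_toFun := lexRev_cont
  continuous_invFun := lexRev_cont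

theorem lexRev_apply (p : 𝕀 × 𝕀) :
    lexRev p = (unitInterval.symm p.1, unitInterval.symm p.2) := rfl

/-- Fibrewise order automorphisms. -/
def lexFib (h : 𝕀 ≃o 𝕀) (k : 𝕀 → 𝕀 ≃o 𝕀) : (𝕀 × 𝕀) ≃ₜ (𝕀 × 𝕀) :=
  lexMk
    { toFun := fun p => (h p.1, k p.1 p.2)
      invFun := fun p => (h.symm p.1, (k (h.symm p.1)).symm p.2)
      left_inv := fun p => by simp
      right_inv := fun p => by simp } (by
    rintro ⟨x, y⟩ ⟨x', y'⟩
    simp only [lexLT, Equiv.coe_fn_mk, OrderIso.lt_iff_lt, EmbeddingLike.apply_eq_iff_eq]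
    refine or_congr Iff.rfl (and_congr_right ?_)
    rintro rfl
    simp)

theorem lexFib_apply (h : 𝕀 ≃o 𝕀) (k : 𝕀 → 𝕀 ≃o 𝕀) (p : 𝕀 × 𝕀) :
    lexFib h k p = (h p.1, k p.1 p.2) := rfl

/-- `p` has a separable neighbourhood. -/
def sepAt (p : 𝕀 × 𝕀) : Prop :=
  ∃ V : Set (𝕀 × 𝕀), IsOpen V ∧ p ∈ V ∧ TopologicalSpace.IsSeparable V

theorem sepAt_map (g : (𝕀 × 𝕀) ≃ₜ (𝕀 × 𝕀)) {p : 𝕀 × 𝕀} (h : sepAt p) : sepAt (g p) := by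
  obtain ⟨V, h1, h2, h3⟩ := h
  exact ⟨g '' V, g.isOpenMap _ h1, mem_image_of_mem _ h2, h3.image g.continuous⟩

theorem sepAt_iff_map (g : (𝕀 × 𝕀) ≃ₜ (𝕀 × 𝕀)) (p : 𝕀 × 𝕀) : sepAt (g p) ↔ sepAt p :=
  ⟨fun h => by simpa using sepAt_map g.symm h, sepAt_map g⟩

theorem lex_fib_cont (x : 𝕀) : Continuous (fun y : 𝕀 => ((x, y) : 𝕀 × 𝕀)) := by
  refine continuous_generateFrom_iff.2 ?_
  rintro _ (⟨a, rfl⟩ | ⟨a, rfl⟩)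
  · rcases lt_trichotomy a.1 x with h | h | h
    · convert isOpen_univ using 1
      ext y; simp [lexLT, h]
    · convert isOpen_Ioi (a := a.2) using 1
      ext y; simp [lexLT, h]
    · convert isOpen_empty using 1
      ext y; simp [lexLT, h.le, h.ne']
  · rcases lt_trichotomy x a.1 with h | h | h
    · convert isOpen_univ using 1
      ext y; simp [lexLT, h]
    · convert isOpen_Iio (a := a.2) using 1
      ext y; simp [lexLT, h]
    · convert isOpen_empty using 1
      ext y; simp [lexLT, h.le, h.ne']

theorem lex_fib_sep (x : 𝕀) : TopologicalSpace.IsSeparable {p : 𝕀 × 𝕀 | p.1 = x} := by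
  refine (TopologicalSpace.isSeparable_range (lex_fib_cont x)).mono ?_
  rintro ⟨a, b⟩ rfl
  exact ⟨b, rfl⟩

theorem sepAt_mid {x y : 𝕀} (h0 : 0 < y) (h1 : y < 1) : sepAt (x, y) :=
  ⟨_, lex_open_fib {x} 0 1, ⟨rfl, h0, h1⟩, (lex_fib_sep x).mono fun _ hp => hp.1⟩

theorem sepAt_zero : sepAt (0, 0) := by
  refine ⟨_, lex_open_lt (0, 1), Or.inr ⟨rfl, zero_lt_one⟩, (lex_fib_sep 0).mono ?_⟩
  rintro p (hp | hp)
  · exact absurd hp (by simp)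
  · exact hp.1

theorem sepAt_one : sepAt (1, 1) := by
  have := sepAt_map lexRev sepAt_zero
  simpa [lexRev_apply] using this

theorem not_sepAt_right {x : 𝕀} (hx : x < 1) : ¬ sepAt (x, 1) := by
  rintro ⟨V, hV, hxV, c, hc, hVc⟩
  obtain ⟨hf0, hf1⟩ : (0 : 𝕀) < ⟨1/2, by norm_num, by norm_num⟩ ∧
    (⟨1/2, by norm_num, by norm_num⟩ : 𝕀) < 1 := by
    constructor <;> (rw [← Subtype.coe_lt_coe]; norm_num)
  set f : 𝕀 := ⟨1/2, by norm_num, by norm_num⟩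
  have ht : Filter.Tendsto (fun s : 𝕀 => ((s, f) : 𝕀 × 𝕀)) (nhdsWithin x (Ioi x)) (nhds (x, 1)) := by
    refine TopologicalSpace.tendsto_nhds_generateFrom_iff.2 ?_
    rintro _ (⟨a, rfl⟩ | ⟨a, rfl⟩) ha
    · filter_upwards [self_mem_nhdsWithin] with s hs
      rcases ha with ha | ha
      · exact Or.inl (ha.trans hs)
      · exact Or.inl (lt_of_eq_of_lt ha.1 hs)
    · have hxa : x < a.1 := by
        rcases ha with ha | ha
        · exact ha
        · exact absurd ha.2 (not_lt.2 (unitInterval.le_one _))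
      filter_upwards [Ioo_mem_nhdsGT hxa] with s hs
      exact Or.inl hs.2
  have h1 := ht (hV.mem_nhds hxV)
  obtain ⟨b, hxb, hb⟩ := (mem_nhdsGT_iff_exists_Ioo_subset' hx).1 h1
  have h2 : Ioo x b ⊆ Prod.fst '' c := by
    intro s hs
    have h3 : ((s, f) : 𝕀 × 𝕀) ∈ closure c := hVc (hb hs)
    obtain ⟨q, hq, hqc⟩ := mem_closure_iff.1 h3 _ (lex_open_fib {s} 0 1) ⟨rfl, hf0, hf1⟩
    exact ⟨q, hqc, hq.1⟩
  have h4 : (Ioo x b).Countable := (hc.image _).mono h2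
  have h5 : (Ioo (x : ℝ) b).Countable := by
    refine (h4.image Subtype.val).mono ?_
    intro t ht
    exact ⟨⟨t, x.2.1.trans ht.1.le, ht.2.le.trans b.2.2⟩, ⟨ht.1, ht.2⟩, rfl⟩
  have h6 := Cardinal.mk_Ioo_real (a := x) (b := b) hxb
  have h7 := h5.le_aleph0
  rw [h6] at h7
  exact absurd h7 (not_le.2 Cardinal.aleph0_lt_continuum)

theorem not_sepAt_left {x : 𝕀} (hx : 0 < x) : ¬ sepAt (x, 0) := by
  intro h
  have := sepAt_map lexRev h
  rw [lexRev_apply] at this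
  simp only [unitInterval.symm_zero] at this
  refine not_sepAt_right ?_ this
  rw [← Subtype.coe_lt_coe]
  have : (0 : ℝ) < x := hx
  simpa using this

theorem sepAt_iff (p : 𝕀 × 𝕀) :
    sepAt p ↔ ((0 < p.2 ∧ p.2 < 1) ∨ p = (0, 0) ∨ p = (1, 1)) := by
  constructor
  · intro h
    obtain ⟨x, y⟩ := p
    rcases eq_or_ne y 0 with rfl | hy0
    · rcases eq_or_ne x 0 with rfl | hx0
      · simp
      · exact absurd h (not_sepAt_left (unitInterval.pos_iff_ne_zero.2 hx0))
    · rcases eq_or_ne y 1 with rfl | hy1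
      · rcases eq_or_ne x 1 with rfl | hx1
        · simp
        · exact absurd h (not_sepAt_right (unitInterval.lt_one_iff_ne_one.2 hx1))
      · exact Or.inl ⟨unitInterval.pos_iff_ne_zero.2 hy0, unitInterval.lt_one_iff_ne_one.2 hy1⟩
  · rintro (h | rfl | rfl)
    · exact sepAt_mid h.1 h.2
    · exact sepAt_zero
    · exact sepAt_one

/-- A fractional linear map of `(u, v)`, extended by the identity. -/
noncomputable def mob (u v l t : ℝ) : ℝ :=
  open Classical in
  if u < t ∧ t < v then u + l * (v - u) * (t - u) / ((v - t) + l * (t - u)) else t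

theorem mob_mem {u v l t : ℝ} (hl : 0 < l) (h1 : u < t) (h2 : t < v) :
    u < mob u v l t ∧ mob u v l t < v := by
  have hd : 0 < (v - t) + l * (t - u) := by
    have := mul_pos hl (sub_pos.2 h1); linarith
  rw [mob, if_pos ⟨h1, h2⟩]
  constructor
  · have : 0 < l * (v - u) * (t - u) / ((v - t) + l * (t - u)) := by
      apply div_pos _ hd
      exact mul_pos (mul_pos hl (by linarith)) (by linarith)
    linarith
  · have : l * (v - u) * (t - u) / ((v - t) + l * (t - u)) < v - u := by
      rw [div_lt_iff₀ hd]
      have := mul_pos (sub_pos.2 (h1.trans h2)) (sub_pos.2 h2)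
      nlinarith
    linarith

theorem mob_out {u v l t : ℝ} (h : t ≤ u ∨ v ≤ t) : mob u v l t = t := by
  rw [mob, if_neg]
  rintro ⟨h1, h2⟩
  rcases h with h | h <;> linarith

theorem mob_strictMono {u v l : ℝ} (hl : 0 < l) : StrictMono (mob u v l) := by
  intro t s hts
  by_cases ht : u < t ∧ t < v
  · by_cases hs : u < s ∧ s < v
    · have hd : 0 < (v - t) + l * (t - u) := by
        have := mul_pos hl (sub_pos.2 ht.1); linarith
      have hd' : 0 < (v - s) + l * (s - u) := by
        have := mul_pos hl (sub_pos.2 hs.1); linarith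
      rw [mob, if_pos ht, mob, if_pos hs]
      have : l * (v - u) * (t - u) / ((v - t) + l * (t - u)) <
          l * (v - u) * (s - u) / ((v - s) + l * (s - u)) := by
        rw [div_lt_div_iff₀ hd hd']
        have h1 : 0 < v - u := by linarith
        have := mul_pos (mul_pos (mul_pos hl h1) h1) (sub_pos.2 hts)
        nlinarith
      linarith
    · have h1 := mob_mem hl ht.1 ht.2
      have h2 : v ≤ s := by
        by_contra h
        exact hs ⟨ht.1.trans hts, not_le.1 h⟩
      rw [mob_out (Or.inr h2)]
      linarith [h1.2]
  · by_cases hs : u < s ∧ s < v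
    · have h1 := mob_mem hl hs.1 hs.2
      have h2 : t ≤ u := by
        by_contra h
        exact ht ⟨not_le.1 h, hts.trans hs.2⟩
      rw [mob_out (Or.inl h2)]
      linarith [h1.1]
    · rw [mob, if_neg ht, mob, if_neg hs]
      exact hts

theorem mob_inv {u v l : ℝ} (hl : 0 < l) (t : ℝ) : mob u v l (mob u v l⁻¹ t) = t := by
  by_cases ht : u < t ∧ t < v
  · have h1 := mob_mem (inv_pos.2 hl) ht.1 ht.2
    have hd : 0 < (v - t) + l⁻¹ * (t - u) := by
      have := mul_pos (inv_pos.2 hl) (sub_pos.2 ht.1); linarith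
    have hd2 : 0 < l * (v - t) + (t - u) := by
      have := mul_pos hl (sub_pos.2 ht.2); linarith
    have hvu : 0 < v - u := by linarith
    have e : mob u v l⁻¹ t = u + (v - u) * (t - u) / (l * (v - t) + (t - u)) := by
      rw [mob, if_pos ht]
      have : l⁻¹ * (v - u) * (t - u) / ((v - t) + l⁻¹ * (t - u)) =
        (v - u) * (t - u) / (l * (v - t) + (t - u)) := by
        rw [div_eq_div_iff hd.ne' hd2.ne']
        field_simp
      rw [this]
    rw [mob, if_pos h1, e]
    have e1 : v - (u + (v - u) * (t - u) / (l * (v - t) + (t - u))) =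
        (v - u) * (l * (v - t)) / (l * (v - t) + (t - u)) := by
      field_simp; ring
    have e2 : u + (v - u) * (t - u) / (l * (v - t) + (t - u)) - u =
      (v - u) * (t - u) / (l * (v - t) + (t - u)) := by ring
    rw [e1, e2]
    have e3 : (v - u) * (l * (v - t)) / (l * (v - t) + (t - u)) +
        l * ((v - u) * (t - u) / (l * (v - t) + (t - u))) =
        l * (v - u) ^ 2 / (l * (v - t) + (t - u)) := by
      field_simp; ring
    rw [e3]
    field_simp
    ring
  · have h : mob u v l⁻¹ t = t := by rw [mob, if_neg ht]
    rw [h, mob, if_neg ht]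

theorem mob_unit {u v l : ℝ} (hl : 0 < l) (hu : 0 ≤ u) (hv : v ≤ 1) (t : 𝕀) :
    mob u v l t ∈ Icc (0 : ℝ) 1 := by
  by_cases ht : u < (t : ℝ) ∧ (t : ℝ) < v
  · have := mob_mem hl ht.1 ht.2
    constructor <;> linarith [this.1, this.2]
  · rw [mob, if_neg ht]
    exact t.2

theorem exists_mover {u v a b : 𝕀} (ha : u < a) (ha' : a < v) (hb : u < b) (hb' : b < v) :
    ∃ k : 𝕀 ≃o 𝕀, k a = b ∧ (∀ t, t ≤ u ∨ v ≤ t → k t = t) ∧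
      ∀ t, u < t → t < v → u < k t ∧ k t < v := by
  have ra : (u : ℝ) < a := ha
  have ra' : (a : ℝ) < v := ha'
  have rb : (u : ℝ) < b := hb
  have rb' : (b : ℝ) < v := hb'
  set l : ℝ := ((b - u) * (v - a)) / ((v - b) * (a - u)) with hl
  have p1 : (0 : ℝ) < b - u := by linarith
  have p2 : (0 : ℝ) < v - a := by linarith
  have p3 : (0 : ℝ) < v - b := by linarith
  have p4 : (0 : ℝ) < a - u := by linarith
  have p5 : (0 : ℝ) < v - u := by linarith
  have hl0 : 0 < l := by positivity
  have hF := mob_unit (u := u) (v := v) hl0 u.2.1 v.2.2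
  have hG := mob_unit (u := u) (v := v) (inv_pos.2 hl0) u.2.1 v.2.2
  let F : 𝕀 → 𝕀 := fun t => ⟨mob u v l t, hF t⟩
  let G : 𝕀 → 𝕀 := fun t => ⟨mob u v l⁻¹ t, hG t⟩
  have hFm : StrictMono F := fun s t hst => mob_strictMono hl0 (show (s : ℝ) < t from hst)
  let k : 𝕀 ≃o 𝕀 := hFm.orderIsoOfRightInverse F G
    (fun t => Subtype.ext (mob_inv hl0 (t : ℝ)))
  refine ⟨k, ?_, ?_, ?_⟩
  · apply Subtype.ext
    change mob u v l a = b
    rw [mob, if_pos ⟨ra, ra'⟩]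
    have e1 : (v : ℝ) - a + l * (a - u) = (v - a) * (v - u) / (v - b) := by
      rw [hl]; field_simp; ring
    rw [e1, hl]
    field_simp
    ring
  · intro t ht
    exact Subtype.ext (mob_out (ht.imp id id))
  · intro t h1 h2
    exact mob_mem hl0 (show (u : ℝ) < t from h1) (show (t : ℝ) < v from h2)

/-- The cell number of `y` in the subdivision of `[0,1]` in `m + 1` pieces. -/
noncomputable def cellD (m : ℕ) (y : 𝕀) : ℤ :=
  ⌊(y : ℝ) * (m + 1)⌋ + ⌈(y : ℝ) * (m + 1)⌉

noncomputable def cellE (m : ℕ) (y : 𝕀) : ℤ := min (cellD m y) (2 * (m + 1) - cellD m y)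

theorem cellD_symm (m : ℕ) (y : 𝕀) : cellD m (unitInterval.symm y) = 2 * (m + 1) - cellD m y := by
  unfold cellD
  have : ((unitInterval.symm y : 𝕀) : ℝ) * (m + 1) = -((y : ℝ) * (m + 1)) + ((m + 1 : ℤ) : ℝ) := by
    rw [unitInterval.coe_symm_eq]; push_cast; ring
  rw [this, Int.floor_add_intCast, Int.ceil_add_intCast, Int.floor_neg, Int.ceil_neg]
  ring

theorem cellE_symm (m : ℕ) (y : 𝕀) : cellE m (unitInterval.symm y) = cellE m y := by
  unfold cellE
  rw [cellD_symm, min_comm]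
  congr 1
  ring

/-- The colouring of the square. -/
noncomputable def col (m : ℕ) (p : 𝕀 × 𝕀) : ℤ :=
  open Classical in
  if p.1 = 0 ∨ p.1 = 1 then
    (if p.2 = 0 ∨ p.2 = 1 then (if p.1 = p.2 then 0 else 1) else 2)
  else (if p.2 = 0 ∨ p.2 = 1 then 3 else 3 + cellE m p.2)

theorem usymm_eq_zero (x : 𝕀) : unitInterval.symm x = 0 ↔ x = 1 := by
  rw [← unitInterval.symm_one, unitInterval.symm_inj]

theorem usymm_eq_one (x : 𝕀) : unitInterval.symm x = 1 ↔ x = 0 := by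
  rw [← unitInterval.symm_zero, unitInterval.symm_inj]

theorem col_rev (m : ℕ) (p : 𝕀 × 𝕀) : col m (lexRev p) = col m p := by
  unfold col
  simp only [lexRev_apply, cellE_symm, usymm_eq_zero, usymm_eq_one, unitInterval.symm_inj]
  simp only [or_comm]

theorem oiso_zero (k : 𝕀 ≃o 𝕀) (x : 𝕀) : k x = 0 ↔ x = 0 := by
  have : k 0 = 0 := map_bot k
  constructor
  · intro h; rw [← this] at h; exact k.injective h
  · rintro rfl; exact this

theorem oiso_one (k : 𝕀 ≃o 𝕀) (x : 𝕀) : k x = 1 ↔ x = 1 := by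
  have : k 1 = 1 := map_top k
  constructor
  · intro h; rw [← this] at h; exact k.injective h
  · rintro rfl; exact this

theorem col_fib (m : ℕ) (h : 𝕀 ≃o 𝕀) (k : 𝕀 → 𝕀 ≃o 𝕀)
    (hk : ∀ x, x ≠ 0 → x ≠ 1 → ∀ y, y ≠ 0 → y ≠ 1 → cellD m (k x y) = cellD m y) (p : 𝕀 × 𝕀) :
    col m (lexFib h k p) = col m p := by
  obtain ⟨x, y⟩ := p
  have h0 : h 0 = 0 := map_bot h
  have h1 : h 1 = 1 := map_top h
  have k0 : ∀ x, k x 0 = 0 := fun x => map_bot (k x)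
  have k1 : ∀ x, k x 1 = 1 := fun x => map_top (k x)
  unfold col
  simp only [lexFib_apply, oiso_zero, oiso_one]
  by_cases hx : x = 0 ∨ x = 1
  · simp only [hx, if_true]
    by_cases hy : y = 0 ∨ y = 1
    · rcases hx with rfl | rfl <;> rcases hy with rfl | rfl <;> simp [h0, h1, k0, k1]
    · simp only [hy, if_false]
  · simp only [hx, if_false]
    by_cases hy : y = 0 ∨ y = 1
    · simp only [hy, if_true]
    · simp only [hy, if_false]
      push Not at hx hy
      rw [cellE, cellE, hk x hx.1 hx.2 y hy.1 hy.2]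

def colG (m : ℕ) : Subgroup ((𝕀 × 𝕀) ≃ₜ (𝕀 × 𝕀)) where
  carrier := {g | ∀ p, col m (g p) = col m p}
  mul_mem' {f g} hf hg p := (hf (g p)).trans (hg p)
  one_mem' _ := rfl
  inv_mem' {g} hg p := by
    have := hg (g.symm p)
    rw [g.apply_symm_apply] at this
    exact this.symm

theorem cellD_even {m : ℕ} {y : 𝕀} {k : ℤ} (h : (y : ℝ) * (m + 1) = k) : cellD m y = 2 * k := by
  unfold cellD
  rw [h, Int.floor_intCast, Int.ceil_intCast]; ring

theorem cellD_odd {m : ℕ} {y : 𝕀} {k : ℤ} (h : (k : ℝ) < (y : ℝ) * (m + 1))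
    (h' : (y : ℝ) * (m + 1) < k + 1) : cellD m y = 2 * k + 1 := by
  unfold cellD
  have h1 : ⌊(y : ℝ) * (m + 1)⌋ = k := Int.floor_eq_iff.2 ⟨h.le, h'⟩
  have h2 : ⌈(y : ℝ) * (m + 1)⌉ = k + 1 := by
    rw [Int.ceil_eq_iff]; push_cast; exact ⟨by linarith, h'.le⟩
  rw [h1, h2]; ring

theorem cellD_pos {m : ℕ} {y : 𝕀} (hy : 0 < y) : 1 ≤ cellD m y := by
  have hw : (0 : ℝ) < (y : ℝ) * (m + 1) := mul_pos hy (by positivity)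
  have h1 : 0 ≤ ⌊(y : ℝ) * (m + 1)⌋ := Int.floor_nonneg.2 hw.le
  have h2 : 0 < ⌈(y : ℝ) * (m + 1)⌉ := Int.ceil_pos.2 hw
  unfold cellD
  omega

theorem usymm_pos {y : 𝕀} (hy : y < 1) : 0 < unitInterval.symm y := by
  rw [← unitInterval.symm_one, unitInterval.symm_lt_symm]; exact hy

theorem cellE_bd {m : ℕ} {y : 𝕀} (hy : 0 < y) (hy' : y < 1) :
    1 ≤ cellE m y ∧ cellE m y ≤ m + 1 := by
  have h1 := cellD_pos (m := m) hy
  have h2 := cellD_pos (m := m) (usymm_pos hy')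
  rw [cellD_symm] at h2
  unfold cellE
  constructor
  · exact le_min h1 h2
  · rcases le_total (cellD m y) (m + 1) with h | h
    · exact (min_le_left _ _).trans h
    · exact (min_le_right _ _).trans (by linarith)

theorem exists_cell_mover (m : ℕ) {y : 𝕀} (hy : 0 < y) (hy' : y < 1) :
    ∃ k : 𝕀 ≃o 𝕀, (∀ t, cellD m (k t) = cellD m t) ∧
      (k y : ℝ) = (cellD m y : ℝ) / (2 * (m + 1)) := by
  have hm : (0 : ℝ) < m + 1 := by positivity
  have ry : (0 : ℝ) < y := hy
  have ry' : (y : ℝ) < 1 := hy'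
  have hw : (0 : ℝ) < (y : ℝ) * (m + 1) := mul_pos hy hm
  have hw' : (y : ℝ) * (m + 1) < m + 1 := by nlinarith
  obtain ⟨n, hn⟩ : ∃ n : ℤ, n = ⌊(y : ℝ) * (m + 1)⌋ := ⟨_, rfl⟩
  have hn0 : 0 ≤ n := by rw [hn]; exact Int.floor_nonneg.2 hw.le
  have hn1 : (n : ℝ) ≤ (y : ℝ) * (m + 1) := by rw [hn]; exact Int.floor_le _
  have hn2 : (y : ℝ) * (m + 1) < n + 1 := by rw [hn]; exact Int.lt_floor_add_one _
  have hnm : n + 1 ≤ m + 1 := by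
    have : (n : ℝ) < ((m + 1 : ℤ) : ℝ) := by push_cast; linarith
    have := Int.cast_lt.1 this
    omega
  have hnm' : (n : ℝ) + 1 ≤ m + 1 := by exact_mod_cast hnm
  have hn0' : (0 : ℝ) ≤ n := by exact_mod_cast hn0
  rcases hn1.eq_or_lt with h | h
  · refine ⟨OrderIso.refl _, fun t => rfl, ?_⟩
    rw [cellD_even h.symm, OrderIso.refl_apply]
    push_cast
    rw [h]
    field_simp
  · have hD := cellD_odd h hn2
    let u : 𝕀 := ⟨n / (m + 1), by positivity, by rw [div_le_one hm]; linarith⟩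
    let v : 𝕀 := ⟨(n + 1) / (m + 1), by positivity, by rw [div_le_one hm]; linarith⟩
    let b : 𝕀 := ⟨(n + 1 / 2) / (m + 1), by positivity, by rw [div_le_one hm]; linarith⟩
    have hu : ∀ t : 𝕀, u < t ↔ (n : ℝ) < t * (m + 1) := fun t => by
      rw [← Subtype.coe_lt_coe]; exact div_lt_iff₀ hm
    have hv : ∀ t : 𝕀, t < v ↔ (t : ℝ) * (m + 1) < n + 1 := fun t => by
      rw [← Subtype.coe_lt_coe]; exact lt_div_iff₀ hm
    have hb : (b : ℝ) * (m + 1) = n + 1 / 2 := div_mul_cancel₀ _ hm.ne'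
    obtain ⟨k, k1, k2, k3⟩ := exists_mover (u := u) (v := v) (a := y) (b := b)
      ((hu _).2 h) ((hv _).2 hn2) ((hu _).2 (by rw [hb]; linarith))
      ((hv _).2 (by rw [hb]; linarith))
    refine ⟨k, ?_, ?_⟩
    · intro t
      by_cases ht : u < t ∧ t < v
      · have := k3 t ht.1 ht.2
        rw [cellD_odd ((hu _).1 ht.1) ((hv _).1 ht.2), cellD_odd ((hu _).1 this.1) ((hv _).1 this.2)]
      · rw [k2]
        by_contra hc
        push Not at hc
        exact ht hc
    · rw [k1, hD]
      change ((n : ℝ) + 1 / 2) / (m + 1) = _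
      push_cast
      field_simp

noncomputable def uhalf : 𝕀 := ⟨1/2, by norm_num, by norm_num⟩

theorem uhalf_pos : 0 < uhalf := by
  rw [← Subtype.coe_lt_coe]; norm_num [uhalf]

theorem uhalf_lt : uhalf < 1 := by
  rw [← Subtype.coe_lt_coe]; norm_num [uhalf]

/-- Representatives of the colour classes. -/
noncomputable def rep (m : ℕ) (i : ℤ) : 𝕀 × 𝕀 :=
  if i = 0 then (0, 0) else if i = 1 then (0, 1) else if i = 2 then (0, uhalf)
  else if i = 3 then (uhalf, 0)
  else (uhalf, Set.projIcc (0 : ℝ) 1 zero_le_one (((i - 3 : ℤ) : ℝ) / (2 * (m + 1))))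

theorem rep_big {m : ℕ} {i : ℤ} (h : 4 ≤ i) : rep m i =
    (uhalf, Set.projIcc (0 : ℝ) 1 zero_le_one (((i - 3 : ℤ) : ℝ) / (2 * (m + 1)))) := by
  unfold rep
  rw [if_neg (by omega), if_neg (by omega), if_neg (by omega), if_neg (by omega)]

theorem upos {x : 𝕀} (h : x ≠ 0) : 0 < x := unitInterval.pos_iff_ne_zero.2 h
theorem ult {x : 𝕀} (h : x ≠ 1) : x < 1 := unitInterval.lt_one_iff_ne_one.2 h

theorem exists_base_mover {x : 𝕀} (h0 : x ≠ 0) (h1 : x ≠ 1) : ∃ h : 𝕀 ≃o 𝕀, h x = uhalf := by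
  obtain ⟨k, hk, _⟩ := exists_mover (upos h0) (ult h1) uhalf_pos uhalf_lt
  exact ⟨k, hk⟩

theorem rev_mem (m : ℕ) : lexRev ∈ colG m := col_rev m

theorem col_mid {m : ℕ} {x y : 𝕀} (h1 : x ≠ 0) (h2 : x ≠ 1) (h3 : y ≠ 0) (h4 : y ≠ 1) :
    col m (x, y) = 3 + cellE m y := by
  simp [col, h1, h2, h3, h4]

theorem usymm_ne_zero {x : 𝕀} (h : x ≠ 1) : unitInterval.symm x ≠ 0 := fun h' =>
  h ((usymm_eq_zero x).1 h')
theorem usymm_ne_one {x : 𝕀} (h : x ≠ 0) : unitInterval.symm x ≠ 1 := fun h' =>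
  h ((usymm_eq_one x).1 h')

theorem to_rep_mid {m : ℕ} {x y : 𝕀} (h1 : x ≠ 0) (h2 : x ≠ 1) (h3 : y ≠ 0) (h4 : y ≠ 1)
    (hD : cellD m y ≤ m + 1) : ∃ g ∈ colG m, g (x, y) = rep m (col m (x, y)) := by
  obtain ⟨h, hh⟩ := exists_base_mover h1 h2
  obtain ⟨k, k1, k2⟩ := exists_cell_mover m (upos h3) (ult h4)
  refine ⟨lexFib h (fun _ => k), col_fib m h _ (fun _ _ _ y _ _ => k1 y), ?_⟩
  have hE : cellE m y = cellD m y := min_eq_left (by linarith)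
  have hb := cellD_pos (m := m) (upos h3)
  rw [col_mid h1 h2 h3 h4, hE, rep_big (by linarith), lexFib_apply]
  refine Prod.ext hh ?_
  change k y = _
  rw [show (3 + cellD m y - 3 : ℤ) = cellD m y by ring, ← k2, Set.projIcc_val]

theorem to_rep (m : ℕ) (p : 𝕀 × 𝕀) : ∃ g ∈ colG m, g p = rep m (col m p) := by
  -- reduction to the image under the reversal
  have red : ∀ p : 𝕀 × 𝕀, (∃ g ∈ colG m, g (lexRev p) = rep m (col m (lexRev p))) →
      ∃ g ∈ colG m, g p = rep m (col m p) := by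
    rintro p ⟨g, hg, hgp⟩
    refine ⟨g * lexRev, (colG m).mul_mem hg (rev_mem m), ?_⟩
    rw [col_rev] at hgp
    exact hgp
  have one : ∀ q : 𝕀 × 𝕀, (1 : (𝕀 × 𝕀) ≃ₜ (𝕀 × 𝕀)) q = q := fun _ => rfl
  obtain ⟨x, y⟩ := p
  by_cases hx : x = 0 ∨ x = 1
  · have key : ∀ y : 𝕀, ∃ g ∈ colG m, g (0, y) = rep m (col m (0, y)) := by
      intro y
      by_cases hy0 : y = 0
      · subst hy0
        exact ⟨1, (colG m).one_mem, by rw [one]; simp [col, rep]⟩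
      by_cases hy1 : y = 1
      · subst hy1
        exact ⟨1, (colG m).one_mem, by rw [one]; simp [col, rep]⟩
      classical
      obtain ⟨h, hh⟩ := exists_base_mover hy0 hy1
      refine ⟨lexFib (OrderIso.refl _) (fun x => if x = 0 then h else OrderIso.refl _),
        col_fib m _ _ ?_, ?_⟩
      · intro x hx _ y _ _
        rw [if_neg hx]; rfl
      · rw [lexFib_apply]
        simp [col, rep, hy0, hy1, hh]
    rcases hx with rfl | rfl
    · exact key y
    · apply red
      rw [lexRev_apply]
      simp only [unitInterval.symm_one]
      exact key _
  · push Not at hx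
    by_cases hy : y = 0 ∨ y = 1
    · have key : ∀ x : 𝕀, x ≠ 0 → x ≠ 1 → ∃ g ∈ colG m, g (x, 0) = rep m (col m (x, 0)) := by
        intro x h0 h1
        obtain ⟨h, hh⟩ := exists_base_mover h0 h1
        refine ⟨lexFib h (fun _ => OrderIso.refl _), col_fib m _ _ (fun _ _ _ _ _ _ => rfl), ?_⟩
        rw [lexFib_apply]
        simp [col, rep, h0, h1, hh]
      rcases hy with rfl | rfl
      · exact key x hx.1 hx.2
      · apply red
        rw [lexRev_apply]
        simp only [unitInterval.symm_one]
        exact key _ (usymm_ne_zero hx.2) (usymm_ne_one hx.1)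
    · push Not at hy
      rcases le_total (cellD m y) (m + 1) with h | h
      · exact to_rep_mid hx.1 hx.2 hy.1 hy.2 h
      · apply red
        refine to_rep_mid (usymm_ne_zero hx.2) (usymm_ne_one hx.1) (usymm_ne_zero hy.2)
          (usymm_ne_one hy.1) ?_
        rw [cellD_symm]; linarith

theorem col_bd (m : ℕ) (p : 𝕀 × 𝕀) : 0 ≤ col m p ∧ col m p < m + 5 := by
  obtain ⟨x, y⟩ := p
  unfold col
  split_ifs with h1 h2 h3 h4
  · constructor <;> omega
  · constructor <;> omega
  · constructor <;> omega
  · constructor <;> omega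
  · push Not at h4
    have := cellE_bd (m := m) (upos h4.1) (ult h4.2)
    constructor <;> omega

/-- The scaled second coordinate of a representative. -/
theorem rep_w {m : ℕ} {i : ℤ} (h : 4 ≤ i) (h' : i < m + 5) :
    (((rep m i).2 : 𝕀) : ℝ) * (m + 1) = ((i - 3 : ℤ) : ℝ) / 2 := by
  have hm : (0 : ℝ) < m + 1 := by positivity
  have h1 : (0 : ℝ) ≤ ((i - 3 : ℤ) : ℝ) := by exact_mod_cast (by omega : (0 : ℤ) ≤ i - 3)
  have h2 : ((i - 3 : ℤ) : ℝ) ≤ m + 1 := by exact_mod_cast (by omega : i - 3 ≤ (m : ℤ) + 1)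
  rw [rep_big h]
  rw [Set.projIcc_of_mem (h := zero_le_one) (hx := ⟨by positivity, by
    rw [div_le_one (by positivity)]; linarith⟩)]
  push_cast
  field_simp

theorem rep_D {m : ℕ} {i : ℤ} (h : 4 ≤ i) (h' : i < m + 5) : cellD m (rep m i).2 = i - 3 := by
  have hw := rep_w h h'
  rcases Int.even_or_odd' (i - 3) with ⟨k, hk | hk⟩
  · rw [hk] at hw ⊢
    exact cellD_even (by rw [hw]; push_cast; ring)
  · rw [hk] at hw ⊢
    apply cellD_odd
    · rw [hw]; push_cast; linarith
    · rw [hw]; push_cast; linarith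

theorem rep_mid {m : ℕ} {i : ℤ} (h : 4 ≤ i) (h' : i < m + 5) :
    0 < (rep m i).2 ∧ (rep m i).2 < 1 := by
  have hw := rep_w h h'
  have hm : (0 : ℝ) < m + 1 := by positivity
  have h1 : (1 : ℝ) ≤ ((i - 3 : ℤ) : ℝ) := by exact_mod_cast (by omega : (1 : ℤ) ≤ i - 3)
  have h2 : ((i - 3 : ℤ) : ℝ) ≤ m + 1 := by exact_mod_cast (by omega : i - 3 ≤ (m : ℤ) + 1)
  constructor
  · rw [← Subtype.coe_lt_coe]
    change (0 : ℝ) < _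
    by_contra hc
    push Not at hc
    nlinarith
  · rw [← Subtype.coe_lt_coe]
    change _ < (1 : ℝ)
    by_contra hc
    push Not at hc
    nlinarith

theorem col_rep {m : ℕ} {i : ℤ} (h : 0 ≤ i) (h' : i < m + 5) : col m (rep m i) = i := by
  by_cases h4 : 4 ≤ i
  · have h1 := rep_mid h4 h'
    have h2 := rep_D h4 h'
    have h3 : rep m i = (uhalf, (rep m i).2) := by rw [rep_big h4]
    rw [h3, col_mid uhalf_pos.ne' uhalf_lt.ne h1.1.ne' h1.2.ne, cellE, h2, min_eq_left] <;> omega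
  · have a := uhalf_pos.ne'
    have b := uhalf_lt.ne
    obtain rfl | rfl | rfl | rfl : i = 0 ∨ i = 1 ∨ i = 2 ∨ i = 3 := by omega
    all_goals simp [col, rep, a, b]

theorem orbit_eq (m : ℕ) (p : 𝕀 × 𝕀) :
    {y | ∃ g ∈ colG m, g p = y} = {q | col m q = col m p} := by
  ext q
  constructor
  · rintro ⟨g, hg, rfl⟩
    exact hg p
  · intro hq
    obtain ⟨g, hg, h1⟩ := to_rep m p
    obtain ⟨f, hf, h2⟩ := to_rep m q
    refine ⟨f⁻¹ * g, (colG m).mul_mem ((colG m).inv_mem hf) hg, ?_⟩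
    change f.symm (g p) = q
    rw [h1, ← show col m q = col m p from hq, ← h2, f.symm_apply_apply]

theorem orbitClosures_colG (m : ℕ) : orbitClosures (colG m) =
    (fun i : ℤ => closure {q : 𝕀 × 𝕀 | col m q = i}) '' (Finset.Ico (0 : ℤ) (m + 5) : Set ℤ) := by
  ext S
  constructor
  · rintro ⟨p, rfl⟩
    rw [orbit_eq]
    exact ⟨col m p, by have := col_bd m p; simpa using this, rfl⟩
  · rintro ⟨i, hi, rfl⟩
    have hi' : 0 ≤ i ∧ i < m + 5 := by simpa using hi
    refine ⟨rep m i, ?_⟩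
    rw [orbit_eq, col_rep hi'.1 hi'.2]

theorem closure_meet {A B O : Set (𝕀 × 𝕀)} (h : closure A = closure B) (hO : IsOpen O)
    {p : 𝕀 × 𝕀} (hp : p ∈ A) (hpO : p ∈ O) : ∃ q ∈ B, q ∈ O := by
  have h1 : p ∈ closure B := h ▸ subset_closure hp
  obtain ⟨q, hq, hqB⟩ := mem_closure_iff.1 h1 O hO hpO
  exact ⟨q, hqB, hq⟩

theorem cellD_le {m : ℕ} {y : 𝕀} {k : ℤ} (h : (y : ℝ) * (m + 1) < k + 1) :
    cellD m y ≤ 2 * k + 1 := by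
  unfold cellD
  have h1 : ⌊(y : ℝ) * (m + 1)⌋ < k + 1 := Int.floor_lt.2 (by push_cast; exact h)
  have h2 : ⌈(y : ℝ) * (m + 1)⌉ ≤ k + 1 := Int.ceil_le.2 (by push_cast; exact h.le)
  omega

theorem le_cellD {m : ℕ} {y : 𝕀} {k : ℤ} (h : (k : ℝ) < (y : ℝ) * (m + 1)) :
    2 * k + 1 ≤ cellD m y := by
  unfold cellD
  have h1 : k ≤ ⌊(y : ℝ) * (m + 1)⌋ := Int.le_floor.2 h.le
  have h2 : k < ⌈(y : ℝ) * (m + 1)⌉ := Int.lt_ceil.2 h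
  omega

theorem closure_ne {m : ℕ} {i j : ℤ} (hi : 0 ≤ i) (hij : i < j) (hj : j < m + 5) :
    closure {q : 𝕀 × 𝕀 | col m q = i} ≠ closure {q : 𝕀 × 𝕀 | col m q = j} := by
  intro h
  have hm : (0 : ℝ) < m + 1 := by positivity
  have ri : rep m i ∈ {q : 𝕀 × 𝕀 | col m q = i} := col_rep hi (hij.trans hj)
  have rj : rep m j ∈ {q : 𝕀 × 𝕀 | col m q = j} := col_rep (hi.trans hij.le) hj
  -- the open set of colour two
  have c2 : ∀ q : 𝕀 × 𝕀, q ∈ {p : 𝕀 × 𝕀 | p.1 ∈ ({0, 1} : Set 𝕀) ∧ 0 < p.2 ∧ p.2 < 1} →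
      col m q = 2 := by
    rintro ⟨x, y⟩ ⟨h1, h2, h3⟩
    have h1 : x = 0 ∨ x = 1 := by simpa using h1
    have h2 : y ≠ 0 := h2.ne'
    have h3 : y ≠ 1 := h3.ne
    simp [col, h1, h2, h3]
  have r2 : rep m 2 ∈ {p : 𝕀 × 𝕀 | p.1 ∈ ({0, 1} : Set 𝕀) ∧ 0 < p.2 ∧ p.2 < 1} := by
    simp [rep, uhalf_pos, uhalf_lt]
  by_cases hj2 : j = 2
  · subst hj2
    obtain ⟨q, hq, hqO⟩ := closure_meet h.symm (lex_open_fib {0, 1} 0 1) rj r2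
    have := c2 q hqO
    have hq : col m q = i := hq
    omega
  by_cases hi2 : i = 2
  · subst hi2
    obtain ⟨q, hq, hqO⟩ := closure_meet h (lex_open_fib {0, 1} 0 1) ri r2
    have := c2 q hqO
    have hq : col m q = j := hq
    omega
  by_cases hi0 : i = 0
  · subst hi0
    obtain ⟨⟨x, y⟩, hq, hqO⟩ := closure_meet h (lex_open_lt (0, 1)) ri
      (by simp [rep, lexLT])
    have hq : col m (x, y) = j := hq
    rcases hqO with hqO | ⟨h1, h2⟩
    · exact absurd hqO (by simp)
    · have h1 : x = 0 := h1
      have h2 : y ≠ 1 := ne_of_lt h2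
      subst h1
      by_cases hy : y = 0
      · subst hy
        simp [col] at hq
        omega
      · have := c2 (0, y) ⟨by simp, upos hy, h2⟩
        omega
  by_cases hi1 : i = 1
  · subst hi1
    have hr : (rep m j).1 = uhalf := by
      unfold rep
      rw [if_neg (by omega), if_neg (by omega), if_neg (by omega)]
      split_ifs <;> rfl
    obtain ⟨⟨x, y⟩, hq, hqO1, hqO2⟩ := closure_meet h.symm
      ((lex_open_gt (0, 1)).inter (lex_open_lt (1, 0))) rj
      ⟨Or.inl (by rw [hr]; exact uhalf_pos), Or.inl (by rw [hr]; exact uhalf_lt)⟩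
    have hq : col m (x, y) = 1 := hq
    have h1 : 0 < x := by
      rcases hqO1 with h | h
      · exact h
      · exact absurd h.2 (not_lt.2 (unitInterval.le_one _))
    have h2 : x < 1 := by
      rcases hqO2 with h | h
      · exact h
      · exact absurd h.2 (not_lt.2 (unitInterval.nonneg _))
    by_cases hy : y = 0 ∨ y = 1
    · simp [col, h1.ne', h2.ne, hy] at hq
    · push Not at hy
      rw [col_mid h1.ne' h2.ne hy.1 hy.2] at hq
      have := (cellE_bd (m := m) (upos hy.1) (ult hy.2)).1
      omega
  have hj4 : 4 ≤ j := by omega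
  have hrj : (rep m j).1 = uhalf := by rw [rep_big hj4]
  have hrj2 := rep_mid hj4 hj
  have midmem : ∀ {q : 𝕀 × 𝕀} {a b : 𝕀},
      q ∈ {p : 𝕀 × 𝕀 | p.1 ∈ (Ioo 0 1 : Set 𝕀) ∧ a < p.2 ∧ p.2 < b} →
      col m q = 3 + cellE m q.2 ∧ 1 ≤ cellE m q.2 := by
    rintro ⟨x, y⟩ a b ⟨⟨h1, h2⟩, h3, h4⟩
    have h3 : 0 < y := lt_of_le_of_lt (unitInterval.nonneg _) h3
    have h4 : y < 1 := lt_of_lt_of_le h4 (unitInterval.le_one _)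
    exact ⟨col_mid (ne_of_gt h1) (ne_of_lt h2) h3.ne' h4.ne, (cellE_bd h3 h4).1⟩
  by_cases hi3 : i = 3
  · subst hi3
    obtain ⟨q, hq, hqO⟩ := closure_meet h.symm (lex_open_fib (Ioo 0 1) 0 1) rj
      ⟨by rw [hrj]; exact ⟨uhalf_pos, uhalf_lt⟩, hrj2⟩
    have hq : col m q = 3 := hq
    have := midmem hqO
    omega
  have hi4 : 4 ≤ i := by omega
  have hri : (rep m i).1 = uhalf := by rw [rep_big hi4]
  have hri2 := rep_mid hi4 (hij.trans hj)
  have wi := rep_w hi4 (hij.trans hj)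
  have wj := rep_w hj4 hj
  have hjm : ((j - 3 : ℤ) : ℝ) ≤ m + 1 := by exact_mod_cast (by omega : j - 3 ≤ (m : ℤ) + 1)
  rcases Int.even_or_odd' (i - 3) with ⟨k, hk | hk⟩
  · have hk0 : (0 : ℝ) ≤ k := by exact_mod_cast (by omega : 0 ≤ k)
    have hkj : 2 * (k : ℝ) + 1 ≤ ((j - 3 : ℤ) : ℝ) := by
      exact_mod_cast (by omega : 2 * k + 1 ≤ j - 3)
    let a : 𝕀 := ⟨k / (m + 1), by positivity, by rw [div_le_one hm]; linarith⟩
    let b : 𝕀 := ⟨(m + 1 - k) / (m + 1), by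
      apply div_nonneg _ hm.le; linarith, by rw [div_le_one hm]; linarith⟩
    have ha : ∀ t : 𝕀, a < t ↔ (k : ℝ) < t * (m + 1) := fun t => by
      rw [← Subtype.coe_lt_coe]; exact div_lt_iff₀ hm
    have hb : ∀ t : 𝕀, t < b ↔ (t : ℝ) * (m + 1) < m + 1 - k := fun t => by
      rw [← Subtype.coe_lt_coe]; exact lt_div_iff₀ hm
    obtain ⟨q, hq, hqO⟩ := closure_meet h.symm (lex_open_fib (Ioo 0 1) a b) rj
      ⟨by rw [hrj]; exact ⟨uhalf_pos, uhalf_lt⟩, (ha _).2 (by rw [wj]; linarith),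
        (hb _).2 (by rw [wj]; linarith)⟩
    have hq : col m q = i := hq
    have h1 := midmem hqO
    have h2 := le_cellD ((ha _).1 hqO.2.1)
    have h3 := (hb _).1 hqO.2.2
    have h4 : cellD m q.2 ≤ 2 * (m - k) + 1 := cellD_le (by push_cast; linarith)
    have h5 : 2 * k + 1 ≤ cellE m q.2 := le_min h2 (by omega)
    omega
  · have hk0 : (0 : ℝ) ≤ k := by exact_mod_cast (by omega : 0 ≤ k)
    have hkm : (k : ℝ) + 1 ≤ m + 1 := by exact_mod_cast (by omega : k + 1 ≤ (m : ℤ) + 1)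
    let b : 𝕀 := ⟨(k + 1) / (m + 1), by positivity, by rw [div_le_one hm]; linarith⟩
    have hb : ∀ t : 𝕀, t < b ↔ (t : ℝ) * (m + 1) < k + 1 := fun t => by
      rw [← Subtype.coe_lt_coe]; exact lt_div_iff₀ hm
    obtain ⟨q, hq, hqO⟩ := closure_meet h (lex_open_fib (Ioo 0 1) 0 b) ri
      ⟨by rw [hri]; exact ⟨uhalf_pos, uhalf_lt⟩, hri2.1,
        (hb _).2 (by rw [wi, hk]; push_cast; linarith)⟩
    have hq : col m q = j := hq
    have h1 := midmem hqO
    have h2 := cellD_le ((hb _).1 hqO.2.2)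
    have h5 : cellE m q.2 ≤ cellD m q.2 := min_le_left _ _
    omega

theorem colG_count (m : ℕ) :
    (orbitClosures (colG m)).Finite ∧ (orbitClosures (colG m)).ncard = m + 5 := by
  rw [orbitClosures_colG]
  refine ⟨(Finset.finite_toSet _).image _, ?_⟩
  rw [Set.InjOn.ncard_image, Set.ncard_coe_finset, Int.card_Ico]
  · omega
  · intro i hi j hj hij
    have hi' : 0 ≤ i ∧ i < m + 5 := by simpa using hi
    have hj' : 0 ≤ j ∧ j < m + 5 := by simpa using hj
    rcases lt_trichotomy i j with h | h | h
    · exact absurd hij (closure_ne hi'.1 h hj'.2)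
    · exact h
    · exact absurd hij.symm (closure_ne hj'.1 h hi'.2)

theorem lexLT_trich (p q : 𝕀 × 𝕀) : lexLT p q ∨ p = q ∨ lexLT q p := by
  rcases lt_trichotomy p.1 q.1 with h | h | h
  · exact Or.inl (Or.inl h)
  · rcases lt_trichotomy p.2 q.2 with h' | h' | h'
    · exact Or.inl (Or.inr ⟨h, h'⟩)
    · exact Or.inr (Or.inl (Prod.ext h h'))
    · exact Or.inr (Or.inr (Or.inr ⟨h.symm, h'⟩))
  · exact Or.inr (Or.inr (Or.inl h))

theorem lexLT_irrefl (p : 𝕀 × 𝕀) : ¬ lexLT p p := by simp [lexLT]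

theorem lexLT_asymm {p q : 𝕀 × 𝕀} (h : lexLT p q) (h' : lexLT q p) : False := by
  rcases h with h | ⟨h, h1⟩ <;> rcases h' with h' | ⟨h', h1'⟩
  · exact h.asymm h'
  · exact h.ne h'.symm
  · exact h'.ne h.symm
  · exact h1.asymm h1'

theorem side_zero (p : 𝕀 × 𝕀) : p.1 = 0 ↔ ∀ q, lexLT q p → sepAt q := by
  obtain ⟨x, y⟩ := p
  constructor
  · rintro hx ⟨s, t⟩ hq
    have hx : x = 0 := hx
    subst hx
    rcases hq with h | ⟨h1, h2⟩
    · exact absurd h (by simp)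
    · have h1 : s = 0 := h1
      have h2 : t < y := h2
      subst h1
      by_cases ht : t = 0
      · subst ht; exact sepAt_zero
      · exact sepAt_mid (upos ht) (h2.trans_le (unitInterval.le_one _))
  · intro h
    by_contra hx
    have hx : 0 < x := upos hx
    refine not_sepAt_right (x := 0) zero_lt_one (h _ (Or.inl hx))

theorem side_one (p : 𝕀 × 𝕀) : p.1 = 1 ↔ ∀ q, lexLT p q → sepAt q := by
  obtain ⟨x, y⟩ := p
  constructor
  · rintro hx ⟨s, t⟩ hq
    have hx : x = 1 := hx
    subst hx
    rcases hq with h | ⟨h1, h2⟩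
    · exact absurd h (not_lt.2 (unitInterval.le_one _))
    · have h1 : 1 = s := h1
      have h2 : y < t := h2
      subst h1
      by_cases ht : t = 1
      · subst ht; exact sepAt_one
      · exact sepAt_mid (lt_of_le_of_lt (unitInterval.nonneg _) h2) (ult ht)
  · intro h
    by_contra hx
    have hx : x < 1 := ult hx
    refine not_sepAt_left (x := 1) zero_lt_one (h _ (Or.inl hx))

theorem ext_zero (p : 𝕀 × 𝕀) : p = (0, 0) ↔ ∀ q, ¬ lexLT q p := by
  constructor
  · rintro rfl q (h | h)
    · exact absurd h (by simp)
    · exact absurd h.2 (by simp)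
  · intro h
    rcases lexLT_trich (0, 0) p with h1 | h1 | h1
    · exact absurd h1 (h _)
    · exact h1.symm
    · rcases h1 with h | h
      · exact absurd h (by simp)
      · exact absurd h.2 (by simp)

theorem ext_one (p : 𝕀 × 𝕀) : p = (1, 1) ↔ ∀ q, ¬ lexLT p q := by
  constructor
  · rintro rfl q (h | h)
    · exact absurd h (not_lt.2 (unitInterval.le_one _))
    · exact absurd h.2 (not_lt.2 (unitInterval.le_one _))
  · intro h
    rcases lexLT_trich (1, 1) p with h1 | h1 | h1
    · rcases h1 with h | h
      · exact absurd h (not_lt.2 (unitInterval.le_one _))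
      · exact absurd h.2 (not_lt.2 (unitInterval.le_one _))
    · exact h1.symm
    · exact absurd h1 (h _)

theorem col_zero_eq (p : 𝕀 × 𝕀) : col 0 p = open Classical in
    (if p = (0, 0) ∨ p = (1, 1) then 0 else if p.1 = 0 ∨ p.1 = 1 then
      (if sepAt p then 2 else 1) else (if sepAt p then 4 else 3)) := by
  obtain ⟨x, y⟩ := p
  have hE : ∀ y : 𝕀, y ≠ 0 → y ≠ 1 → cellE 0 y = 1 := by
    intro y h0 h1
    have := cellE_bd (m := 0) (upos h0) (ult h1)
    push_cast at this
    omega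
  simp only [sepAt_iff]
  by_cases hx0 : x = 0
  · subst hx0
    by_cases hy0 : y = 0
    · subst hy0; simp [col]
    · by_cases hy1 : y = 1
      · subst hy1; simp [col]
      · simp [col, hy0, hy1, upos, ult]
  · by_cases hx1 : x = 1
    · subst hx1
      by_cases hy0 : y = 0
      · subst hy0; simp [col]
      · by_cases hy1 : y = 1
        · subst hy1; simp [col]
        · simp [col, hy0, hy1, upos, ult]
    · by_cases hy0 : y = 0
      · subst hy0; simp [col, hx0, hx1]
      · by_cases hy1 : y = 1
        · subst hy1; simp [col, hx0, hx1]
        · simp [col, hx0, hx1, hy0, hy1, upos, ult, hE]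

theorem col_zero_mono (g : (𝕀 × 𝕀) ≃ₜ (𝕀 × 𝕀)) (hg : ∀ p q, lexLT p q → lexLT (g p) (g q))
    (p : 𝕀 × 𝕀) : col 0 (g p) = col 0 p := by
  have hg' : ∀ p q, lexLT (g p) (g q) ↔ lexLT p q := by
    intro p q
    refine ⟨fun h => ?_, hg p q⟩
    rcases lexLT_trich p q with h1 | h1 | h1
    · exact h1
    · subst h1; exact absurd h (lexLT_irrefl _)
    · exact (lexLT_asymm h (hg _ _ h1)).elim
  have e1 : g p = (0, 0) ↔ p = (0, 0) := by
    rw [ext_zero, ext_zero, ← g.surjective.forall.symm]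
    simp only [hg']
  have e2 : g p = (1, 1) ↔ p = (1, 1) := by
    rw [ext_one, ext_one, ← g.surjective.forall.symm]
    simp only [hg']
  have e3 : (g p).1 = 0 ↔ p.1 = 0 := by
    rw [side_zero, side_zero, ← g.surjective.forall.symm]
    simp only [hg', sepAt_iff_map]
  have e4 : (g p).1 = 1 ↔ p.1 = 1 := by
    rw [side_one, side_one, ← g.surjective.forall.symm]
    simp only [hg', sepAt_iff_map]
  rw [col_zero_eq, col_zero_eq]
  have e5 : sepAt (g p) ↔ sepAt p := sepAt_iff_map g p
  simp only [e1, e2, e3, e4]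
  by_cases hs : sepAt p
  · simp only [if_pos hs, if_pos (e5.2 hs)]
  · simp only [if_neg hs, if_neg (fun h => hs (e5.1 h))]

theorem colG_zero : colG 0 = ⊤ := by
  refine eq_top_iff.2 fun g _ => ?_
  intro p
  rcases lex_mono_or_anti g with h | h
  · exact col_zero_mono g h p
  · have := col_zero_mono (g.trans lexRev)
      (fun p q hpq => (lexLT_symm (g p) (g q)).2 (h p q hpq)) p
    rw [← this]
    exact (col_rev 0 (g p)).symm

theorem top_is_image (G : Subgroup ((𝕀 × 𝕀) ≃ₜ (𝕀 × 𝕀))) :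
    orbitClosures ⊤ = (fun S => closure {y | ∃ g : (𝕀 × 𝕀) ≃ₜ (𝕀 × 𝕀), ∃ s ∈ S, g s = y}) ''
      orbitClosures G := by
  have key : ∀ x : 𝕀 × 𝕀, closure {y | ∃ g ∈ (⊤ : Subgroup ((𝕀 × 𝕀) ≃ₜ (𝕀 × 𝕀))), g x = y} =
      closure {y | ∃ g : (𝕀 × 𝕀) ≃ₜ (𝕀 × 𝕀), ∃ s ∈ closure {y | ∃ g ∈ G, g x = y}, g s = y} := by
    intro x
    apply subset_antisymm
    · apply closure_mono
      rintro _ ⟨g, _, rfl⟩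
      exact ⟨g, x, subset_closure ⟨1, G.one_mem, rfl⟩, rfl⟩
    · apply closure_minimal _ isClosed_closure
      rintro _ ⟨g, s, hs, rfl⟩
      have h1 : g s ∈ closure (g '' {y | ∃ g ∈ G, g x = y}) :=
        image_closure_subset_closure_image g.continuous ⟨s, hs, rfl⟩
      refine closure_mono ?_ h1
      rintro _ ⟨_, ⟨f, _, rfl⟩, rfl⟩
      exact ⟨g * f, trivial, rfl⟩
  ext S
  constructor
  · rintro ⟨x, rfl⟩
    exact ⟨_, ⟨x, rfl⟩, (key x).symm⟩
  · rintro ⟨_, ⟨x, rfl⟩, rfl⟩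
    exact ⟨x, (key x).symm⟩

theorem bot_infinite : (orbitClosures ⊥).Infinite := by
  have : Infinite 𝕀 := (Set.Icc_infinite (zero_lt_one' ℝ)).to_subtype
  have hinf : (Set.univ : Set 𝕀).Infinite := Set.infinite_univ
  have hinj : InjOn (fun x : 𝕀 => closure {y : 𝕀 × 𝕀 |
      ∃ g ∈ (⊥ : Subgroup ((𝕀 × 𝕀) ≃ₜ (𝕀 × 𝕀))), g (x, uhalf) = y}) univ := by
    intro x _ x' _ h
    obtain ⟨q, ⟨g, hg, hq⟩, hqO⟩ := closure_meet h (lex_open_fib {x} 0 1)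
      (p := (x, uhalf)) ⟨1, Subgroup.one_mem _, rfl⟩ ⟨rfl, uhalf_pos, uhalf_lt⟩
    rw [Subgroup.mem_bot] at hg
    subst hg
    have h1 : ((x', uhalf) : 𝕀 × 𝕀) = q := hq
    subst h1
    exact hqO.1.symm
  refine (hinf.image hinj).mono ?_
  rintro _ ⟨x, _, rfl⟩
  exact ⟨(x, uhalf), rfl⟩

end helpers

/-- `P_h(𝕆) = {n : n ≥ 4} ∪ {+∞}`: (i) the full homeomorphism group of the
lexicographically ordered square has exactly 5 closures of orbits, i.e. height 4;
(ii) every subgroup has infinitely many, or at least 5, closures of orbits; (iii) for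
every `n ≥ 4` some subgroup has exactly `n + 1` closures of orbits (height `n`);
and (iv) some subgroup has infinitely many closures of orbits (height `+∞`). -/
theorem lex_square_heights :
    ((orbitClosures ⊤).Finite ∧ (orbitClosures ⊤).ncard = 5) ∧
    (∀ G, (orbitClosures G).Finite → 5 ≤ (orbitClosures G).ncard) ∧
    (∀ n : ℕ, 4 ≤ n → ∃ G, (orbitClosures G).Finite ∧ (orbitClosures G).ncard = n + 1) ∧
    (∃ G, (orbitClosures G).Infinite) := by
  have htop := colG_count 0
  rw [colG_zero] at htop
  refine ⟨htop, ?_, ?_, ⊥, bot_infinite⟩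
  · intro G hG
    have h := Set.ncard_image_le (f := fun S => @closure _ lexTop
      {y | ∃ g : @Homeomorph (𝕀 × 𝕀) (𝕀 × 𝕀) lexTop lexTop, ∃ s ∈ S, g s = y}) hG
    rw [← top_is_image G, htop.2] at h
    exact h
  · intro n hn
    obtain ⟨m, rfl⟩ := Nat.exists_eq_add_of_le hn
    refine ⟨colG m, (colG_count m).1, ?_⟩
    rw [(colG_count m).2]
    omega
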